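/- Lemma 9: Let U₁₆ = 2 + η₁ + 2η₀ + 3η₃. If d > 3 is a prime divisor of gcd(U₁₆, (4^p − 1)/3), then one of the following holds: (1) d = 11; (2) d = 1 + 2p and 3p = 4(1−4y)² + 3; (3) d = 1 + 6p and 7p = 4(1−4y)² − 1; (4) d = 1 + 8p and p = 4(1−4y)² + 1. -/

import Mathlib

open Finset

/-- The cyclotomic class `D_i` of order 4 modulo `p` with respect to the
primitive root `θ`: `{θ^(i+4j) mod p : 0 ≤ j < (p-1)/4}`. -/
def cycD (p θ i : ℕ) : Finset ℕ :=
  (Finset.range ((p - 1) / 4)).image fun j => θ ^ (i + 4 * j) % p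

/-- `η_i = Σ_{t ∈ D_i} 4^t` as an integer. -/
def eta4 (p θ : ℕ) (i : ℕ) : ℤ := ∑ t ∈ cycD p θ i, (4 : ℤ) ^ t

/-- `H = η₀ + η₂ − η₁ − η₃`. -/
def Hval (p θ : ℕ) : ℤ := eta4 p θ 0 + eta4 p θ 2 - eta4 p θ 1 - eta4 p θ 3

/-!
If a prime `d > 3` divides `4 ^ p - 1`, then `4` is a primitive `p`-th root of unity modulo `d`, so
modulo `d` the `η_i` are the quartic Gauss periods of the additive character `t ↦ 4 ^ t`. Expressing
the Gauss sums of a quartic character `χ` through the periods and multiplying them gives, with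
`A = η₀ - η₂` and `B = η₁ - η₃`, the relations `H ^ 2 = p`, `A ^ 2 + B ^ 2 = -p` and `A * B = y * H`
modulo `d`. The last one holds because the Jacobi sum `J(χ, χ)` has imaginary part `2 * y`: its norm
is `p`, and the value of `(0, 1)₄` fixes the sign. Together with `U₁₆ = 0` these relations force
`d ∣ (5 * p + 1) ^ 2 - 4 * p * (1 - 4 * y) ^ 2`.

The order of `4` and Euler's criterion for `2` give `d = 1 + 2 * k * p` with `k ≠ 2`. The cofactor
of `d` is then `1 + j * p` with `j % 8 = 3` and `k * j ≤ 12`, which leaves four pairs `(k, j)`.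
-/

section QuarticElements

variable {G : Type*} [Group G] {g : G}

lemma inv_eq_pow_three_of_orderOf_eq_four (hg : orderOf g = 4) : g⁻¹ = g ^ 3 :=
  inv_eq_of_mul_eq_one_right (by rw [← pow_succ', ← orderOf_dvd_iff_pow_eq_one, hg])

lemma inv_sq_eq_sq_of_orderOf_eq_four (hg : orderOf g = 4) : (g ^ 2)⁻¹ = g ^ 2 :=
  inv_eq_of_mul_eq_one_right (by rw [← pow_add, ← orderOf_dvd_iff_pow_eq_one, hg])

lemma ne_one_of_orderOf_eq_four (hg : orderOf g = 4) : g ≠ 1 := by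
  rintro rfl
  simp at hg

lemma sq_ne_one_of_orderOf_eq_four (hg : orderOf g = 4) : g ^ 2 ≠ 1 :=
  pow_ne_one_of_lt_orderOf two_ne_zero (by lia)

end QuarticElements

section CyclotomicNumbers

variable {K R : Type*} [Field K] [CommRing R]

lemma sum_range_pow_mul_pow_apply [IsDomain R] [DecidableEq R] {n : ℕ} {χ : MulChar K R}
    (hχ : χ ^ n = 1) {μ ν : R} (hμν : μ * ν = 1) (hν : ν ^ n = 1) (a : K) :
    ∑ j ∈ range n, ν ^ j * (χ ^ j) a = if χ a = μ then (n : R) else 0 := by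
  have hμ : χ a = μ ↔ ν * χ a = 1 :=
    ⟨fun h ↦ by rw [h, mul_comm, hμν], fun h ↦ by linear_combination μ * h - χ a * hμν⟩
  obtain rfl | ha := eq_or_ne a 0
  · rw [MulChar.map_zero, mul_zero, iff_false_right zero_ne_one] at hμ
    rw [MulChar.map_zero, if_neg hμ]
    exact sum_eq_zero fun j _ ↦ by rw [MulChar.map_zero, mul_zero]
  have hpow (j : ℕ) : (χ ^ j) a = χ a ^ j := χ.pow_apply_coe j (Units.mk0 a ha)
  simp only [hpow, ← mul_pow]
  split_ifs with h
  · simp [hμ.mp h]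
  have hroot : (ν * χ a) ^ n = 1 := by
    rw [mul_pow, hν, one_mul, ← hpow, hχ, MulChar.one_apply ha.isUnit]
  have hgeom := geom_sum_mul (ν * χ a) n
  rw [hroot, sub_self] at hgeom
  exact (mul_eq_zero.mp hgeom).resolve_right (sub_ne_zero.mpr (mt hμ.mpr h))

variable [Fintype K]

lemma sum_apply_mul_apply_add_one (χ φ : MulChar K R) :
    ∑ a, χ a * φ (a + 1) = χ (-1) * jacobiSum χ φ := by
  rw [jacobiSum, mul_sum, ← Equiv.sum_comp (Equiv.neg K)]
  refine sum_congr rfl fun a _ ↦ ?_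
  rw [Equiv.neg_apply, ← neg_one_mul, map_mul, neg_one_mul, neg_add_eq_sub, mul_assoc]

-- The substitution `a ↦ a / (a - 1)` exchanges the two sums.
lemma jacobiSum_eq_apply_neg_one_mul_jacobiSum_inv (χ φ : MulChar K R) :
    jacobiSum χ φ = χ (-1) * jacobiSum χ (χ * φ)⁻¹ := by
  classical
  have sub_one_ne {a : K} (ha : a ∈ (univ \ {0, 1} : Finset K)) : a ≠ 0 ∧ a - 1 ≠ 0 := by
    simpa [sub_eq_zero] using ha
  have mapsTo {a : K} (ha : a ∈ (univ \ {0, 1} : Finset K)) :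
      a / (a - 1) ∈ (univ \ {0, 1} : Finset K) := by
    obtain ⟨h0, h1⟩ := sub_one_ne ha
    simp [div_eq_iff h1, h0, eq_sub_iff_add_eq]
  have involutive {a : K} (ha : a ∈ (univ \ {0, 1} : Finset K)) :
      a / (a - 1) / (a / (a - 1) - 1) = a := by
    obtain ⟨-, h1⟩ := sub_one_ne ha
    field_simp
    ring
  rw [jacobiSum_eq_sum_sdiff, jacobiSum_eq_sum_sdiff, mul_sum]
  refine sum_nbij' (fun a ↦ a / (a - 1)) (fun a ↦ a / (a - 1)) (fun _ ↦ mapsTo)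
    (fun _ ↦ mapsTo) (fun _ ↦ involutive) (fun _ ↦ involutive) fun a ha ↦ ?_
  obtain ⟨-, h1⟩ := sub_one_ne ha
  have hsub : (1 - a / (a - 1))⁻¹ = 1 - a := by
    field_simp
    ring
  have hfactor : -1 * (a / (a - 1)) * (1 - a) = a := by
    field_simp
    ring
  rw [MulChar.inv_apply', hsub, MulChar.mul_apply, ← mul_assoc, ← mul_assoc, ← map_mul, ← map_mul,
    hfactor]

lemma jacobiSum_sq_of_orderOf_eq_four {χ : MulChar K R} (hχ : orderOf χ = 4)
    (hχneg : χ (-1) = -1) : jacobiSum χ (χ ^ 2) = -jacobiSum χ χ := by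
  rw [jacobiSum_eq_apply_neg_one_mul_jacobiSum_inv, ← pow_succ',
    ← inv_eq_pow_three_of_orderOf_eq_four hχ, inv_inv, hχneg, neg_one_mul]

/-- The cyclotomic number counting the consecutive pairs `a, a + 1` whose members lie in the level
sets `χ = μ` and `χ = ν`. For the character sending a primitive root to an `n`-th root of unity `ζ`
and `μ = ζ ^ i`, `ν = ζ ^ j`, this is the classical `(i, j)_n`. -/
def cyclotomicNumber [DecidableEq R] (χ : MulChar K R) (μ ν : R) : ℕ :=
  #{a : K | χ a = μ ∧ χ (a + 1) = ν}

variable [IsDomain R]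

lemma sq_mul_cyclotomicNumber [DecidableEq R] {n : ℕ} {χ : MulChar K R} (hχ : χ ^ n = 1)
    {μ₀ ν₀ μ₁ ν₁ : R} (h₀ : μ₀ * ν₀ = 1) (hν₀ : ν₀ ^ n = 1) (h₁ : μ₁ * ν₁ = 1)
    (hν₁ : ν₁ ^ n = 1) :
    (n : R) ^ 2 * cyclotomicNumber χ μ₀ μ₁ = ∑ j ∈ range n, ∑ m ∈ range n,
      ν₀ ^ j * ν₁ ^ m * ((χ ^ j) (-1) * jacobiSum (χ ^ j) (χ ^ m)) := by
  calc (n : R) ^ 2 * cyclotomicNumber χ μ₀ μ₁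
      = ∑ a, (if χ a = μ₀ then (n : R) else 0) * (if χ (a + 1) = μ₁ then (n : R) else 0) := by
        rw [cyclotomicNumber, card_filter, Nat.cast_sum, mul_sum]
        refine sum_congr rfl fun a _ ↦ ?_
        split_ifs <;> simp_all [sq]
    _ = ∑ a, ∑ j ∈ range n, ∑ m ∈ range n,
          ν₀ ^ j * ν₁ ^ m * ((χ ^ j) a * (χ ^ m) (a + 1)) := by
        simp only [← sum_range_pow_mul_pow_apply hχ h₀ hν₀,
          ← sum_range_pow_mul_pow_apply hχ h₁ hν₁, sum_mul_sum, mul_mul_mul_comm]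
    _ = _ := by
        simp only [← sum_apply_mul_apply_add_one, mul_sum]
        rw [sum_comm]
        exact sum_congr rfl fun j _ ↦ sum_comm

lemma sixteen_mul_cyclotomicNumber_one [DecidableEq R] {χ : MulChar K R} (hχ : orderOf χ = 4)
    (hχneg : χ (-1) = -1) {ζ : R} (hζ : ζ ^ 2 = -1) :
    16 * (cyclotomicNumber χ 1 ζ : R) = Fintype.card K + 1
      - (jacobiSum χ χ + jacobiSum χ⁻¹ χ⁻¹) + 2 * ζ * (jacobiSum χ χ - jacobiSum χ⁻¹ χ⁻¹) := by
  have hχ4 : χ ^ 4 = 1 := hχ ▸ pow_orderOf_eq_one χ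
  have hχ1 := ne_one_of_orderOf_eq_four hχ
  have hχ2 := sq_ne_one_of_orderOf_eq_four hχ
  have hinv := inv_eq_pow_three_of_orderOf_eq_four hχ
  have hsqinv := inv_sq_eq_sq_of_orderOf_eq_four hχ
  have hinvneg : χ⁻¹ (-1) = -1 := by rw [MulChar.inv_apply', inv_neg_one, hχneg]
  have hsqneg : (χ ^ 2) (-1) = 1 := by
    rw [MulChar.pow_apply' _ two_ne_zero, hχneg, neg_one_sq]
  have honeneg : (1 : MulChar K R) (-1) = 1 := MulChar.one_apply isUnit_one.neg
  have j12 := jacobiSum_sq_of_orderOf_eq_four hχ hχneg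
  have j32 : jacobiSum χ⁻¹ (χ ^ 2) = -jacobiSum χ⁻¹ χ⁻¹ := by
    rw [← jacobiSum_sq_of_orderOf_eq_four (by rwa [orderOf_inv]) hinvneg, inv_pow, hsqinv]
  have j13 : jacobiSum χ χ⁻¹ = 1 := by rw [jacobiSum_nontrivial_inv hχ1, hχneg, neg_neg]
  have j22 : jacobiSum (χ ^ 2) (χ ^ 2) = -1 := by
    have := jacobiSum_nontrivial_inv hχ2
    rwa [hsqinv, hsqneg] at this
  have hexpand := sq_mul_cyclotomicNumber hχ4 (μ₀ := 1) (ν₀ := 1) (μ₁ := ζ) (ν₁ := -ζ)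
    (one_mul 1) (one_pow 4) (by linear_combination -hζ) (by linear_combination (ζ ^ 2 - 1) * hζ)
  simp only [sum_range_succ, sum_range_zero, pow_zero, pow_one, ← hinv, honeneg, hχneg, hsqneg,
    hinvneg, one_pow, jacobiSum_one_one, jacobiSum_one_nontrivial hχ1,
    jacobiSum_one_nontrivial hχ2, jacobiSum_one_nontrivial (inv_ne_one.mpr hχ1),
    jacobiSum_comm _ (1 : MulChar K R), jacobiSum_comm _ χ, jacobiSum_comm (χ ^ 2) χ⁻¹,
    j12, j13, j22, j32] at hexpand
  push_cast at hexpand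
  linear_combination hexpand
    + (jacobiSum χ χ + jacobiSum χ⁻¹ χ⁻¹ + 2 * ζ * jacobiSum χ⁻¹ χ⁻¹ + 2 * ζ - 2) * hζ

end CyclotomicNumbers

lemma sq_eq_neg_one_of_isPrimitiveRoot_four {R : Type*} [CommRing R] [IsDomain R] {ζ : R}
    (hζ : IsPrimitiveRoot ζ 4) : ζ ^ 2 = -1 :=
  (hζ.pow four_pos (by norm_num : 4 = 2 * 2)).eq_neg_one_of_two_right

section GaussPeriods

variable {K R : Type*} [Field K] [Fintype K] [CommRing R] [DecidableEq R]

/-- The Gauss period of the additive character `ψ` over the level set `χ = μ`. When `χ` has order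
`n` and `μ` runs through the `n`-th roots of unity, these are the `n` classical Gauss periods. -/
def gaussPeriod (χ : MulChar K R) (ψ : AddChar K R) (μ : R) : R :=
  ∑ a with χ a = μ, ψ a

lemma gaussSum_pow_eq_sum_gaussPeriod [IsDomain R] {n : ℕ} [NeZero n] {χ : MulChar K R}
    (hχ : χ ^ n = 1) {ζ : R} (hζ : IsPrimitiveRoot ζ n) (ψ : AddChar K R) (j : ℕ) :
    gaussSum (χ ^ j) ψ = ∑ k ∈ range n, ζ ^ (j * k) * gaussPeriod χ ψ (ζ ^ k) := by
  simp only [gaussPeriod, sum_filter, mul_sum]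
  rw [gaussSum, sum_comm]
  refine sum_congr rfl fun a _ ↦ ?_
  obtain rfl | ha := eq_or_ne a 0
  · rw [MulChar.map_zero, zero_mul]
    refine (sum_eq_zero fun k _ ↦ ?_).symm
    rw [MulChar.map_zero, if_neg (pow_ne_zero k (hζ.ne_zero (NeZero.ne n))).symm, mul_zero]
  have hpow : (χ ^ j) a = χ a ^ j := χ.pow_apply_coe j (Units.mk0 a ha)
  obtain ⟨m, hm, hχa⟩ : ∃ m < n, χ a = ζ ^ m := MulChar.exists_apply_eq_pow hχ hζ ha
  rw [sum_eq_single_of_mem m (mem_range.mpr hm), if_pos hχa, hpow, hχa, ← pow_mul, mul_comm m]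
  intro k hk hkm
  rw [if_neg fun h ↦ hkm (hζ.pow_inj (mem_range.mp hk) hm (h.symm.trans hχa)), mul_zero]

variable [IsDomain R] {χ : MulChar K R} {ζ : R} {ψ : AddChar K R}

lemma gaussSum_pow_eq_quartic_gaussPeriods (hχ : χ ^ 4 = 1) (hζ : IsPrimitiveRoot ζ 4)
    (ψ : AddChar K R) (j : ℕ) :
    gaussSum (χ ^ j) ψ = gaussPeriod χ ψ 1 + ζ ^ j * gaussPeriod χ ψ ζ
      + (-1) ^ j * gaussPeriod χ ψ (-1) + (-ζ) ^ j * gaussPeriod χ ψ (-ζ) := by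
  have hsq := sq_eq_neg_one_of_isPrimitiveRoot_four hζ
  have hcube : ζ ^ 3 = -ζ := by linear_combination ζ * hsq
  simp only [gaussSum_pow_eq_sum_gaussPeriod hχ hζ, mul_comm j, pow_mul, sum_range_succ,
    sum_range_zero, zero_add, pow_zero, pow_one, one_pow, one_mul, hsq, hcube]

lemma gaussSum_eq_quartic_gaussPeriods (hχ : χ ^ 4 = 1) (hζ : IsPrimitiveRoot ζ 4)
    (ψ : AddChar K R) :
    gaussSum χ ψ = (gaussPeriod χ ψ 1 - gaussPeriod χ ψ (-1))
      + ζ * (gaussPeriod χ ψ ζ - gaussPeriod χ ψ (-ζ)) := by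
  have h := gaussSum_pow_eq_quartic_gaussPeriods hχ hζ ψ 1
  rw [pow_one] at h
  linear_combination h

lemma gaussSum_sq_eq_quartic_gaussPeriods (hχ : χ ^ 4 = 1) (hζ : IsPrimitiveRoot ζ 4)
    (ψ : AddChar K R) :
    gaussSum (χ ^ 2) ψ = gaussPeriod χ ψ 1 - gaussPeriod χ ψ ζ + gaussPeriod χ ψ (-1)
      - gaussPeriod χ ψ (-ζ) := by
  have hsq := sq_eq_neg_one_of_isPrimitiveRoot_four hζ
  have h := gaussSum_pow_eq_quartic_gaussPeriods hχ hζ ψ 2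
  linear_combination h + (gaussPeriod χ ψ ζ + gaussPeriod χ ψ (-ζ)) * hsq

lemma gaussSum_pow_three_eq_quartic_gaussPeriods (hχ : χ ^ 4 = 1) (hζ : IsPrimitiveRoot ζ 4)
    (ψ : AddChar K R) :
    gaussSum (χ ^ 3) ψ = (gaussPeriod χ ψ 1 - gaussPeriod χ ψ (-1))
      - ζ * (gaussPeriod χ ψ ζ - gaussPeriod χ ψ (-ζ)) := by
  have hsq := sq_eq_neg_one_of_isPrimitiveRoot_four hζ
  have h := gaussSum_pow_eq_quartic_gaussPeriods hχ hζ ψ 3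
  linear_combination h + ζ * (gaussPeriod χ ψ ζ - gaussPeriod χ ψ (-ζ)) * hsq

lemma sum_quartic_gaussPeriods (hχ : χ ^ 4 = 1) (hζ : IsPrimitiveRoot ζ 4) (hψ : ψ ≠ 1) :
    gaussPeriod χ ψ 1 + gaussPeriod χ ψ ζ + gaussPeriod χ ψ (-1) + gaussPeriod χ ψ (-ζ) = -1 := by
  have h := gaussSum_pow_eq_quartic_gaussPeriods hχ hζ ψ 0
  rw [pow_zero, gaussSum_one_left hψ] at h
  linear_combination -h

lemma sq_alternating_sum_quartic_gaussPeriods (hχ : orderOf χ = 4) (hζ : IsPrimitiveRoot ζ 4)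
    (hψ : ψ.IsPrimitive) :
    (gaussPeriod χ ψ 1 - gaussPeriod χ ψ ζ + gaussPeriod χ ψ (-1) - gaussPeriod χ ψ (-ζ)) ^ 2
      = Fintype.card K := by
  have hχ4 : χ ^ 4 = 1 := hχ ▸ pow_orderOf_eq_one χ
  have hquad : (χ ^ 2).IsQuadratic :=
    MulChar.isQuadratic_iff_sq_eq_one.mpr (by rw [← pow_mul, hχ4])
  have hneg : (χ ^ 2) (-1) = 1 := by
    rw [MulChar.pow_apply' _ two_ne_zero, ← map_pow, neg_one_sq, map_one]
  rw [← gaussSum_sq_eq_quartic_gaussPeriods hχ4 hζ,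
    gaussSum_sq (sq_ne_one_of_orderOf_eq_four hχ) hquad hψ, hneg, one_mul]

lemma sum_sq_sub_quartic_gaussPeriods (hχ : orderOf χ = 4) (hχneg : χ (-1) = -1)
    (hζ : IsPrimitiveRoot ζ 4) (hψ : ψ.IsPrimitive) :
    (gaussPeriod χ ψ 1 - gaussPeriod χ ψ (-1)) ^ 2 + (gaussPeriod χ ψ ζ - gaussPeriod χ ψ (-ζ)) ^ 2
      = -Fintype.card K := by
  have hχ4 : χ ^ 4 = 1 := hχ ▸ pow_orderOf_eq_one χ
  have hsq := sq_eq_neg_one_of_isPrimitiveRoot_four hζ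
  have h := gaussSum_mul_gaussSum_pow_orderOf_sub_one (ne_one_of_orderOf_eq_four hχ) hψ
  rw [hχ, hχneg, gaussSum_eq_quartic_gaussPeriods hχ4 hζ,
    gaussSum_pow_three_eq_quartic_gaussPeriods hχ4 hζ] at h
  linear_combination h + (gaussPeriod χ ψ ζ - gaussPeriod χ ψ (-ζ)) ^ 2 * hsq

lemma four_mul_mul_sub_quartic_gaussPeriods (hχ : orderOf χ = 4) (hζ : IsPrimitiveRoot ζ 4)
    (ψ : AddChar K R) :
    4 * ζ * ((gaussPeriod χ ψ 1 - gaussPeriod χ ψ (-1)) *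
        (gaussPeriod χ ψ ζ - gaussPeriod χ ψ (-ζ)))
      = (gaussPeriod χ ψ 1 - gaussPeriod χ ψ ζ + gaussPeriod χ ψ (-1) - gaussPeriod χ ψ (-ζ)) *
        (jacobiSum χ χ - jacobiSum χ⁻¹ χ⁻¹) := by
  have hχ4 : χ ^ 4 = 1 := hχ ▸ pow_orderOf_eq_one χ
  have hχ2 := sq_ne_one_of_orderOf_eq_four hχ
  have hJ : gaussSum (χ ^ 2) ψ * jacobiSum χ χ = gaussSum χ ψ ^ 2 := by
    rw [sq χ, sq (gaussSum χ ψ), jacobiSum_mul_nontrivial (by rwa [← sq])]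
  have hJ' : gaussSum (χ ^ 2) ψ * jacobiSum χ⁻¹ χ⁻¹ = gaussSum χ⁻¹ ψ ^ 2 := by
    rw [← inv_sq_eq_sq_of_orderOf_eq_four hχ, ← inv_pow, sq χ⁻¹, sq (gaussSum χ⁻¹ ψ),
      jacobiSum_mul_nontrivial (by rwa [← sq, inv_pow, inv_ne_one])]
  rw [← gaussSum_sq_eq_quartic_gaussPeriods hχ4 hζ, mul_sub (gaussSum _ _), hJ, hJ',
    inv_eq_pow_three_of_orderOf_eq_four hχ, gaussSum_eq_quartic_gaussPeriods hχ4 hζ,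
    gaussSum_pow_three_eq_quartic_gaussPeriods hχ4 hζ]
  ring

lemma sq_five_mul_card_add_one_of_quartic_gaussPeriods_relation {y : R} (h2 : (2 : R) ≠ 0)
    (hχ : orderOf χ = 4) (hχneg : χ (-1) = -1) (hζ : IsPrimitiveRoot ζ 4) (hψ : ψ.IsPrimitive)
    (hJ : jacobiSum χ χ - jacobiSum χ⁻¹ χ⁻¹ = 4 * ζ * y)
    (hU : 2 + gaussPeriod χ ψ ζ + 2 * gaussPeriod χ ψ 1 + 3 * gaussPeriod χ ψ (-ζ) = 0) :
    (5 * (Fintype.card K : R) + 1) ^ 2 = 4 * Fintype.card K * (1 - 4 * y) ^ 2 := by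
  have hψ1 : ψ ≠ 1 := fun h ↦ hψ one_ne_zero (by rw [AddChar.mulShift_one, h])
  have hsum := sum_quartic_gaussPeriods (hχ ▸ pow_orderOf_eq_one χ) hζ hψ1
  have halt := sq_alternating_sum_quartic_gaussPeriods hχ hζ hψ
  have hsq := sum_sq_sub_quartic_gaussPeriods hχ hχneg hζ hψ
  have h4ζ : 4 * ζ ≠ 0 := by
    rw [show (4 : R) = 2 * 2 by norm_num]
    exact mul_ne_zero (mul_ne_zero h2 h2) (hζ.ne_zero four_ne_zero)
  set A := gaussPeriod χ ψ 1 - gaussPeriod χ ψ (-1) with hA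
  set B := gaussPeriod χ ψ ζ - gaussPeriod χ ψ (-ζ) with hB
  set H := gaussPeriod χ ψ 1 - gaussPeriod χ ψ ζ + gaussPeriod χ ψ (-1) - gaussPeriod χ ψ (-ζ)
    with hH
  have hmul : A * B = H * y := mul_left_cancel₀ h4ζ (by
    linear_combination four_mul_mul_sub_quartic_gaussPeriods hχ hζ ψ + H * hJ)
  have hlin : H - 1 = 2 * (A - B) :=
    mul_left_cancel₀ h2 (by linear_combination 2 * hH - 4 * hA + 4 * hB - 4 * hU + 6 * hsum)
  have hroot : 5 * (Fintype.card K : R) + 1 = 2 * H * (1 - 4 * y) := by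
    linear_combination (H - 1 + 2 * (A - B)) * hlin - halt + 4 * hsq - 8 * hmul
  rw [hroot]
  linear_combination 4 * (1 - 4 * y) ^ 2 * halt

end GaussPeriods

section GaussianIntegers

lemma isPrimitiveRoot_four_of_sq_eq_neg_one {R : Type*} [CommRing R] {a : R} (h2 : (2 : R) ≠ 0)
    (ha : a ^ 2 = -1) : IsPrimitiveRoot a 4 := by
  have hne : ¬ a ^ 2 ^ 1 = 1 := fun h ↦ h2 (by linear_combination ha - h)
  have hpow : a ^ 2 ^ (1 + 1) = 1 := by linear_combination (a ^ 2 - 1) * ha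
  exact IsPrimitiveRoot.iff_orderOf.mpr (orderOf_eq_prime_pow hne hpow)

lemma map_sub_map_star {R : Type*} [CommRing R] (f : GaussianInt →+* R) (z : GaussianInt) :
    f z - f (star z) = 2 * f Zsqrtd.sqrtd * z.im := by
  have h : z - star z = 2 * Zsqrtd.sqrtd * (z.im : GaussianInt) := by
    ext <;> simp [two_mul]
  rw [← map_sub, h, map_mul, map_mul, map_ofNat, map_intCast]

variable {K : Type*} [Field K]

lemma ringHomComp_starRingEnd_eq_inv (χ : MulChar K GaussianInt) :
    χ.ringHomComp (starRingEnd GaussianInt) = χ⁻¹ := by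
  refine eq_inv_of_mul_eq_one_left (MulChar.ext fun a ↦ ?_)
  have hnorm : (χ a).norm = 1 :=
    (Zsqrtd.norm_eq_one_iff' (by norm_num) _).mpr (a.isUnit.map χ)
  rw [MulChar.mul_apply, MulChar.ringHomComp_apply, starRingEnd_apply, mul_comm,
    ← Zsqrtd.norm_eq_mul_conj, hnorm, Int.cast_one, MulChar.one_apply_coe]

variable [Fintype K]

lemma jacobiSum_inv_inv_eq_star (χ φ : MulChar K GaussianInt) :
    jacobiSum χ⁻¹ φ⁻¹ = star (jacobiSum χ φ) := by
  rw [← ringHomComp_starRingEnd_eq_inv, ← ringHomComp_starRingEnd_eq_inv, jacobiSum_ringHomComp,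
    starRingEnd_apply]

lemma norm_jacobiSum {χ φ : MulChar K GaussianInt} (hχ : χ ≠ 1) (hφ : φ ≠ 1) (hχφ : χ * φ ≠ 1) :
    (jacobiSum χ φ).norm = Fintype.card K := by
  have hinj : Function.Injective GaussianInt.toComplex := GaussianInt.toComplex_injective
  have hchar : ringChar ℂ ≠ ringChar K := by
    rw [ringChar.eq_zero]
    exact (CharP.ringChar_ne_zero_of_finite K).symm
  have h := jacobiSum_mul_jacobiSum_inv hchar ((MulChar.ringHomComp_ne_one_iff hinj).mpr hχ)
    ((MulChar.ringHomComp_ne_one_iff hinj).mpr hφ)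
    (by rwa [← MulChar.ringHomComp_mul, MulChar.ringHomComp_ne_one_iff hinj])
  rw [MulChar.ringHomComp_inv, MulChar.ringHomComp_inv, jacobiSum_ringHomComp,
    jacobiSum_ringHomComp, jacobiSum_inv_inv_eq_star, ← map_mul, ← Zsqrtd.norm_eq_mul_conj,
    map_intCast] at h
  exact_mod_cast h

lemma sixteen_mul_cyclotomicNumber_gaussianInt {χ : MulChar K GaussianInt} (hχ : orderOf χ = 4)
    (hχneg : χ (-1) = -1) :
    16 * (cyclotomicNumber χ 1 Zsqrtd.sqrtd : ℤ) = Fintype.card K + 1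
      - 2 * (jacobiSum χ χ).re - 4 * (jacobiSum χ χ).im := by
  have h := sixteen_mul_cyclotomicNumber_one hχ hχneg (ζ := Zsqrtd.sqrtd) (by decide)
  rw [jacobiSum_inv_inv_eq_star] at h
  have hre : 16 * (cyclotomicNumber χ 1 Zsqrtd.sqrtd : ℤ) = Fintype.card K + 1
      - ((jacobiSum χ χ).re + (jacobiSum χ χ).re)
      + -(2 * ((jacobiSum χ χ).im + (jacobiSum χ χ).im)) := by
    simpa using congrArg Zsqrtd.re h
  linear_combination hre

end GaussianIntegers

section CharactersOnGenerators

variable {K R : Type*} [Field K] [Fintype K] [CommRing R] {g : K}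

lemma exists_pow_eq_of_isPrimitiveRoot (hg : IsPrimitiveRoot g (Fintype.card K - 1)) {a : K}
    (ha : a ≠ 0) : ∃ n < Fintype.card K - 1, g ^ n = a :=
  have : NeZero (Fintype.card K - 1) := ⟨Nat.sub_ne_zero_of_lt Fintype.one_lt_card⟩
  hg.eq_pow_of_pow_eq_one (FiniteField.pow_card_sub_one_eq_one a ha)

lemma exists_mulChar_apply_eq_of_isPrimitiveRoot (hg : IsPrimitiveRoot g (Fintype.card K - 1))
    {ζ : R} (hζ : ζ ^ (Fintype.card K - 1) = 1) : ∃ χ : MulChar K R, χ g = ζ := by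
  classical
  have hcard : Fintype.card K - 1 ≠ 0 := Nat.sub_ne_zero_of_lt Fintype.one_lt_card
  obtain ⟨u, rfl⟩ := hg.isUnit hcard
  obtain ⟨w, rfl⟩ := IsUnit.of_pow_eq_one hζ hcard
  have hu (x : Kˣ) : x ∈ Subgroup.zpowers u := by
    obtain ⟨n, -, hn⟩ := exists_pow_eq_of_isPrimitiveRoot hg x.ne_zero
    exact ⟨n, Units.ext (by simpa using hn)⟩
  have hw : w ∈ rootsOfUnity (Fintype.card Kˣ) R := by
    rw [mem_rootsOfUnity', Fintype.card_units, hζ]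
  exact ⟨MulChar.ofRootOfUnity hw hu, MulChar.ofRootOfUnity_spec hw hu⟩

lemma orderOf_eq_orderOf_apply_of_isPrimitiveRoot (hg : IsPrimitiveRoot g (Fintype.card K - 1))
    (χ : MulChar K R) : orderOf χ = orderOf (χ g) := by
  obtain ⟨u, rfl⟩ := hg.isUnit (Nat.sub_ne_zero_of_lt Fintype.one_lt_card)
  refine orderOf_eq_orderOf_iff.mpr fun n ↦ ⟨fun h ↦ ?_, fun h ↦ MulChar.ext fun a ↦ ?_⟩
  · rw [← MulChar.pow_apply_coe, h, MulChar.one_apply_coe]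
  · obtain ⟨m, -, hm⟩ := exists_pow_eq_of_isPrimitiveRoot hg a.ne_zero
    rw [MulChar.pow_apply_coe, MulChar.one_apply_coe, ← hm, map_pow, pow_right_comm, h, one_pow]

lemma orderOf_eq_four_of_isPrimitiveRoot (h2 : (2 : R) ≠ 0)
    (hg : IsPrimitiveRoot g (Fintype.card K - 1)) {χ : MulChar K R} (hχ : χ g ^ 2 = -1) :
    orderOf χ = 4 := by
  rw [orderOf_eq_orderOf_apply_of_isPrimitiveRoot hg,
    ← (isPrimitiveRoot_four_of_sq_eq_neg_one h2 hχ).eq_orderOf]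

lemma apply_neg_one_of_isPrimitiveRoot (hg : IsPrimitiveRoot g (Fintype.card K - 1))
    (hcard : Fintype.card K % 8 = 5) {χ : MulChar K R} (hχ : χ g ^ 2 = -1) : χ (-1) = -1 := by
  obtain ⟨m, hm⟩ : ∃ m, Fintype.card K - 1 = 2 * (2 * m + 1) * 2 :=
    ⟨Fintype.card K / 8, by lia⟩
  have hneg : g ^ (2 * (2 * m + 1)) = -1 :=
    (hg.pow (by lia) hm).eq_neg_one_of_two_right
  rw [← hneg, map_pow, pow_mul, hχ, Odd.neg_one_pow ⟨m, rfl⟩]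

end CharactersOnGenerators

section CyclotomicClasses

variable {p : ℕ} [Fact p.Prime] {θ : ℕ} {R : Type*} [CommRing R] [IsDomain R]
  {χ : MulChar (ZMod p) R}

lemma mem_cycD_iff (hp : p % 4 = 1) (hθ : IsPrimitiveRoot (θ : ZMod p) (p - 1))
    (hχ : IsPrimitiveRoot (χ θ) 4) {i : ℕ} (hi : i < 4) {t : ℕ} :
    t ∈ cycD p θ i ↔ t < p ∧ χ t = χ θ ^ i := by
  simp only [cycD, mem_image, mem_range]
  constructor
  · rintro ⟨j, -, rfl⟩
    refine ⟨Nat.mod_lt _ (NeZero.pos p), ?_⟩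
    rw [ZMod.natCast_mod, Nat.cast_pow, map_pow, pow_add, pow_mul, hχ.pow_eq_one, one_pow, mul_one]
  · rintro ⟨ht, hχt⟩
    have ht0 : (t : ZMod p) ≠ 0 := by
      rintro h0
      rw [h0, MulChar.map_zero] at hχt
      exact pow_ne_zero i (hχ.ne_zero four_ne_zero) hχt.symm
    obtain ⟨n, hn, hθn⟩ := exists_pow_eq_of_isPrimitiveRoot (by rwa [ZMod.card]) ht0
    rw [ZMod.card] at hn
    have hni : n % 4 = i := hχ.pow_inj (Nat.mod_lt _ four_pos) hi (by
      rw [← pow_eq_pow_mod _ hχ.pow_eq_one, ← map_pow, hθn, hχt])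
    have hdiv : i + 4 * (n / 4) = n := by rw [← hni, Nat.mod_add_div]
    refine ⟨n / 4, by lia, ?_⟩
    rw [hdiv, ← ZMod.val_natCast, Nat.cast_pow, hθn, ZMod.val_cast_of_lt ht]

lemma sum_cycD [DecidableEq R] {M : Type*} [AddCommMonoid M] (hp : p % 4 = 1)
    (hθ : IsPrimitiveRoot (θ : ZMod p) (p - 1)) (hχ : IsPrimitiveRoot (χ θ) 4) {i : ℕ} (hi : i < 4)
    (f : ZMod p → M) :
    ∑ t ∈ cycD p θ i, f t = ∑ a with χ a = χ θ ^ i, f a := by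
  refine sum_nbij' (fun t ↦ (t : ZMod p)) ZMod.val (fun t ht ↦ ?_) (fun a ha ↦ ?_)
    (fun t ht ↦ ?_) (fun a _ ↦ ZMod.natCast_zmod_val a) (fun _ _ ↦ rfl)
  · exact mem_filter.mpr ⟨mem_univ _, ((mem_cycD_iff hp hθ hχ hi).mp ht).2⟩
  · rw [mem_cycD_iff hp hθ hχ hi, ZMod.natCast_zmod_val]
    exact ⟨ZMod.val_lt a, (mem_filter.mp ha).2⟩
  · exact ZMod.val_cast_of_lt ((mem_cycD_iff hp hθ hχ hi).mp ht).1

lemma eta4_cast_eq_gaussPeriod [DecidableEq R] (hp : p % 4 = 1)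
    (hθ : IsPrimitiveRoot (θ : ZMod p) (p - 1)) (hχ : IsPrimitiveRoot (χ θ) 4) {i : ℕ} (hi : i < 4)
    (h4 : (4 : R) ^ p = 1) :
    (eta4 p θ i : R) = gaussPeriod χ (AddChar.zmodChar p h4) (χ θ ^ i) := by
  rw [eta4, gaussPeriod, ← sum_cycD hp hθ hχ hi, Int.cast_sum]
  refine sum_congr rfl fun t _ ↦ ?_
  rw [AddChar.zmodChar_apply', Int.cast_pow, Int.cast_ofNat]

lemma card_filter_cycD_eq_cyclotomicNumber [DecidableEq R] (hp : p % 4 = 1)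
    (hθ : IsPrimitiveRoot (θ : ZMod p) (p - 1)) (hχ : IsPrimitiveRoot (χ θ) 4) :
    #{a ∈ cycD p θ 0 | (a + 1) % p ∈ cycD p θ 1} = cyclotomicNumber χ 1 (χ θ) := by
  have hmem (t : ℕ) : (t + 1) % p ∈ cycD p θ 1 ↔ χ (t + 1) = χ θ := by
    rw [mem_cycD_iff hp hθ hχ (by norm_num), ZMod.natCast_mod, Nat.cast_add_one, pow_one,
      and_iff_right (Nat.mod_lt _ (NeZero.pos p))]
  rw [cyclotomicNumber, card_filter, card_filter]
  simp only [hmem]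
  rw [sum_cycD hp hθ hχ four_pos fun a ↦ if χ (a + 1) = χ θ then 1 else 0, sum_filter]
  simp only [pow_zero, ite_and]

end CyclotomicClasses

section BinaryQuadraticForms

lemma eq_zero_of_dvd_of_sq_add_mul_sq_eq_sq {n m r s : ℤ} (hn : 1 < n)
    (h : r ^ 2 + n * s ^ 2 = m ^ 2) (hdvd : m ∣ s) : s = 0 := by
  obtain ⟨k, rfl⟩ := hdvd
  by_contra hk
  have hpos : 0 < (m * k) ^ 2 := sq_pos_of_ne_zero hk
  have hk0 : 0 < k ^ 2 := sq_pos_of_ne_zero (right_ne_zero_of_mul hk)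
  nlinarith [sq_nonneg r, sq_nonneg m]

lemma sq_eq_sq_of_prime_eq_sq_add_mul_sq {n p x y u w : ℤ} (hn : 1 < n) (hp : Prime p)
    (hxy : p = x ^ 2 + n * y ^ 2) (huw : p = u ^ 2 + n * w ^ 2) : y ^ 2 = w ^ 2 := by
  have hfactor : (x * w - u * y) * (x * w + u * y) = p * (w ^ 2 - y ^ 2) := by
    linear_combination (-w ^ 2) * hxy + y ^ 2 * huw
  have hzero : (x * w - u * y) * (x * w + u * y) = 0 := by
    rcases hp.dvd_or_dvd (Dvd.intro _ hfactor.symm) with h | h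
    · have hnorm : (x * u + n * y * w) ^ 2 + n * (x * w - u * y) ^ 2 = p ^ 2 := by
        linear_combination (-p) * huw - (u ^ 2 + n * w ^ 2) * hxy
      rw [eq_zero_of_dvd_of_sq_add_mul_sq_eq_sq hn hnorm h, zero_mul]
    · have hnorm : (x * u - n * y * w) ^ 2 + n * (x * w + u * y) ^ 2 = p ^ 2 := by
        linear_combination (-p) * huw - (u ^ 2 + n * w ^ 2) * hxy
      rw [eq_zero_of_dvd_of_sq_add_mul_sq_eq_sq hn hnorm h, mul_zero]
  have hsub : w ^ 2 - y ^ 2 = 0 :=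
    (mul_eq_zero.mp (hfactor.symm.trans hzero)).resolve_left hp.ne_zero
  linear_combination -hsub

lemma eq_two_mul_of_prime_eq_sq_add_sq {p x y u v : ℤ} (hp : Prime p) (hx : x % 4 = 1)
    (hxy : p = x ^ 2 + 4 * y ^ 2) (huv : p = u ^ 2 + v ^ 2) (hsum : u + 2 * v = 4 * y - x) :
    v = 2 * y := by
  have hv : Even v := by
    refine (Int.even_pow' two_ne_zero).mp (even_iff_exists_two_mul.mpr
      ⟨-6 * y ^ 2 - 2 * v ^ 2 + 4 * x * y + 8 * y * v - 2 * x * v, ?_⟩)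
    linear_combination hxy - huv - (u - 2 * v + 4 * y - x) * hsum
  obtain ⟨w, rfl⟩ := even_iff_exists_two_mul.mp hv
  have hyw := sq_eq_sq_of_prime_eq_sq_add_mul_sq (by norm_num) hp hxy
    (by linear_combination huv : p = u ^ 2 + 4 * w ^ 2)
  obtain rfl | rfl := sq_eq_sq_iff_eq_or_eq_neg.mp hyw
  · rfl
  · have hxu : x ^ 2 = u ^ 2 := by linear_combination huv - hxy
    obtain rfl | rfl := sq_eq_sq_iff_eq_or_eq_neg.mp hxu <;> lia

end BinaryQuadraticForms

section PeriodCongruence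

variable {p : ℕ} [Fact p.Prime] {θ : ℕ} {x y : ℤ}

lemma sqrtd_sq_gaussianInt : (Zsqrtd.sqrtd : GaussianInt) ^ 2 = -1 := by
  rw [sq, Zsqrtd.dmuld, Int.cast_neg, Int.cast_one]

lemma im_jacobiSum_eq_two_mul {χ : MulChar (ZMod p) GaussianInt} (hp8 : p % 8 = 5)
    (hθ : IsPrimitiveRoot (θ : ZMod p) (p - 1)) (hχθ : χ θ = Zsqrtd.sqrtd)
    (hx : x % 4 = 1) (hxy : (p : ℤ) = x ^ 2 + 4 * y ^ 2)
    (hy : 16 * (#{a ∈ cycD p θ 0 | (a + 1) % p ∈ cycD p θ 1} : ℤ) = p + 1 + 2 * x - 8 * y) :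
    (jacobiSum χ χ).im = 2 * y := by
  have hgen : IsPrimitiveRoot (θ : ZMod p) (Fintype.card (ZMod p) - 1) := by rwa [ZMod.card]
  have hsq : χ θ ^ 2 = -1 := hχθ ▸ sqrtd_sq_gaussianInt
  have hprim := isPrimitiveRoot_four_of_sq_eq_neg_one two_ne_zero hsq
  have hord := orderOf_eq_four_of_isPrimitiveRoot two_ne_zero hgen hsq
  have hneg := apply_neg_one_of_isPrimitiveRoot hgen (by rwa [ZMod.card]) hsq
  have hχ1 := ne_one_of_orderOf_eq_four hord
  have hnorm := norm_jacobiSum hχ1 hχ1 (by rw [← sq]; exact sq_ne_one_of_orderOf_eq_four hord)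
  have hcyc := sixteen_mul_cyclotomicNumber_gaussianInt hord hneg
  rw [card_filter_cycD_eq_cyclotomicNumber (by lia) hθ hprim, hχθ, hcyc, ZMod.card] at hy
  rw [ZMod.card, Zsqrtd.norm_def] at hnorm
  have hsum : (jacobiSum χ χ).re + 2 * (jacobiSum χ χ).im = 4 * y - x := by lia
  exact eq_two_mul_of_prime_eq_sq_add_sq (Nat.prime_iff_prime_int.mp Fact.out) hx hxy
    (by linear_combination -hnorm) hsum

lemma nonempty_gaussianInt_ringHom (F : Type*) [Field F] [IsAlgClosed F] :
    Nonempty (GaussianInt →+* F) := by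
  obtain ⟨i, hi⟩ := IsAlgClosed.exists_pow_nat_eq (-1 : F) two_pos
  exact ⟨Zsqrtd.lift ⟨i, by rw [← sq, hi, Int.cast_neg, Int.cast_one]⟩⟩

lemma exists_mulChar_jacobiSum_sub_jacobiSum_inv (F : Type*) [Field F] [IsAlgClosed F]
    (hp8 : p % 8 = 5) (hθ : IsPrimitiveRoot (θ : ZMod p) (p - 1)) (hx : x % 4 = 1)
    (hxy : (p : ℤ) = x ^ 2 + 4 * y ^ 2)
    (hy : 16 * (#{a ∈ cycD p θ 0 | (a + 1) % p ∈ cycD p θ 1} : ℤ) = p + 1 + 2 * x - 8 * y) :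
    ∃ χ : MulChar (ZMod p) F, χ θ ^ 2 = -1 ∧
      jacobiSum χ χ - jacobiSum χ⁻¹ χ⁻¹ = 4 * χ θ * y := by
  have hpow : (Zsqrtd.sqrtd : GaussianInt) ^ (Fintype.card (ZMod p) - 1) = 1 := by
    obtain ⟨m, hm⟩ : ∃ m, p - 1 = 2 * (2 * m) := ⟨(p - 1) / 4, by lia⟩
    rw [ZMod.card, hm, pow_mul, sqrtd_sq_gaussianInt, pow_mul, neg_one_sq, one_pow]
  obtain ⟨χ, hχθ⟩ := exists_mulChar_apply_eq_of_isPrimitiveRoot (by rwa [ZMod.card]) hpow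
  obtain ⟨f⟩ := nonempty_gaussianInt_ringHom F
  refine ⟨χ.ringHomComp f, ?_, ?_⟩
  · rw [MulChar.ringHomComp_apply, hχθ, ← map_pow, sqrtd_sq_gaussianInt, map_neg, map_one]
  · rw [MulChar.ringHomComp_inv, jacobiSum_ringHomComp, jacobiSum_ringHomComp,
      jacobiSum_inv_inv_eq_star, map_sub_map_star, im_jacobiSum_eq_two_mul hp8 hθ hχθ hx hxy hy,
      MulChar.ringHomComp_apply, hχθ]
    push_cast
    ring

lemma cast_sq_five_mul_add_one_sub_eq_zero {F : Type*} [Field F] [IsAlgClosed F]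
    (h2 : (2 : F) ≠ 0) (h4 : IsPrimitiveRoot (4 : F) p) (hp8 : p % 8 = 5)
    (hθ : IsPrimitiveRoot (θ : ZMod p) (p - 1)) (hx : x % 4 = 1)
    (hxy : (p : ℤ) = x ^ 2 + 4 * y ^ 2)
    (hy : 16 * (#{a ∈ cycD p θ 0 | (a + 1) % p ∈ cycD p θ 1} : ℤ) = p + 1 + 2 * x - 8 * y)
    (hU : ((2 + eta4 p θ 1 + 2 * eta4 p θ 0 + 3 * eta4 p θ 3 : ℤ) : F) = 0) :
    (((5 * p + 1) ^ 2 - 4 * p * (1 - 4 * y) ^ 2 : ℤ) : F) = 0 := by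
  classical
  have hgen : IsPrimitiveRoot (θ : ZMod p) (Fintype.card (ZMod p) - 1) := by rwa [ZMod.card]
  obtain ⟨χ, hsq, hJ⟩ := exists_mulChar_jacobiSum_sub_jacobiSum_inv F hp8 hθ hx hxy hy
  have hζ := isPrimitiveRoot_four_of_sq_eq_neg_one h2 hsq
  have hcube : χ θ ^ 3 = -χ θ := by linear_combination χ θ * hsq
  have heta {i : ℕ} (hi : i < 4) := eta4_cast_eq_gaussPeriod (by lia) hθ hζ hi h4.pow_eq_one
  have h := sq_five_mul_card_add_one_of_quartic_gaussPeriods_relation h2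
    (orderOf_eq_four_of_isPrimitiveRoot h2 hgen hsq)
    (apply_neg_one_of_isPrimitiveRoot hgen (by rwa [ZMod.card]) hsq) hζ
    (AddChar.zmodChar_primitive_of_primitive_root p h4) hJ
  push_cast at hU
  rw [heta (by norm_num), heta (by norm_num), heta (by norm_num), pow_zero, pow_one, hcube] at hU
  push_cast
  simpa only [ZMod.card, sub_eq_zero] using h hU

lemma dvd_sq_five_mul_add_one_sub {q : ℕ} [Fact q.Prime] (hq : q ≠ 2)
    (h4 : IsPrimitiveRoot (4 : ZMod q) p) (hp8 : p % 8 = 5)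
    (hθ : IsPrimitiveRoot (θ : ZMod p) (p - 1)) (hx : x % 4 = 1)
    (hxy : (p : ℤ) = x ^ 2 + 4 * y ^ 2)
    (hy : 16 * (#{a ∈ cycD p θ 0 | (a + 1) % p ∈ cycD p θ 1} : ℤ) = p + 1 + 2 * x - 8 * y)
    (hU : (q : ℤ) ∣ 2 + eta4 p θ 1 + 2 * eta4 p θ 0 + 3 * eta4 p θ 3) :
    (q : ℤ) ∣ (5 * p + 1) ^ 2 - 4 * p * (1 - 4 * y) ^ 2 := by
  let F := AlgebraicClosure (ZMod q)
  have : CharP F q := charP_of_injective_algebraMap (algebraMap (ZMod q) F).injective q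
  have h4F : IsPrimitiveRoot (4 : F) p := by
    simpa only [map_ofNat] using h4.map_of_injective (algebraMap (ZMod q) F).injective
  have h2 : (2 : F) ≠ 0 := Ring.two_ne_zero (by rwa [ringChar.eq F q])
  rw [← CharP.intCast_eq_zero_iff F q] at hU ⊢
  exact cast_sq_five_mul_add_one_sub_eq_zero h2 h4F hp8 hθ hx hxy hy hU

end PeriodCongruence

section PrimeDivisors

lemma isPrimitiveRoot_intCast_of_dvd_pow_sub_one {p q : ℕ} [Fact p.Prime] {a : ℤ}
    (hpow : (q : ℤ) ∣ a ^ p - 1) (hne : ¬ (q : ℤ) ∣ a - 1) : IsPrimitiveRoot (a : ZMod q) p := by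
  rw [← ZMod.intCast_zmod_eq_zero_iff_dvd, Int.cast_sub, Int.cast_one, sub_eq_zero] at hpow hne
  rw [Int.cast_pow] at hpow
  exact IsPrimitiveRoot.iff_orderOf.mpr (orderOf_eq_prime hpow hne)

variable {q : ℕ} [Fact q.Prime]

lemma two_mul_dvd_sub_one_of_isPrimitiveRoot_sq (hq : q ≠ 2) {a : ZMod q} (ha : a ≠ 0) {n : ℕ}
    (h : IsPrimitiveRoot (a ^ 2) n) : 2 * n ∣ q - 1 := by
  obtain ⟨m, rfl⟩ := (Fact.out : q.Prime).odd_of_ne_two hq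
  rw [Nat.add_sub_cancel]
  refine mul_dvd_mul_left 2 (h.dvd_of_pow_eq_one m ?_)
  rw [← pow_mul]
  exact ZMod.pow_card_sub_one_eq_one ha

lemma even_of_four_pow_eq_one {n : ℕ} (hq : q = 4 * n + 1) (h : (4 : ZMod q) ^ n = 1) :
    Even n := by
  have hq2 : q ≠ 2 := by lia
  have h2 : (2 : ZMod q) ≠ 0 := Ring.two_ne_zero (by rwa [ZMod.ringChar_zmod_n])
  have hsquare : IsSquare (2 : ZMod q) := by
    rw [ZMod.euler_criterion q h2, show q / 2 = 2 * n by lia, pow_mul,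
      show (2 : ZMod q) ^ 2 = 4 by norm_num, h]
  rw [ZMod.exists_sq_eq_two_iff hq2] at hsquare
  rw [Nat.even_iff]
  lia

lemma exists_eq_one_add_two_mul_mul {p : ℕ} (hq : q ≠ 2) (hp : Odd p)
    (h4 : IsPrimitiveRoot (4 : ZMod q) p) : ∃ k, 0 < k ∧ k ≠ 2 ∧ q = 1 + 2 * k * p := by
  have hq1 : 1 < q := (Fact.out : q.Prime).one_lt
  have h2 : (2 : ZMod q) ≠ 0 := Ring.two_ne_zero (by rwa [ZMod.ringChar_zmod_n])
  obtain ⟨k, hk⟩ := two_mul_dvd_sub_one_of_isPrimitiveRoot_sq hq h2 (n := p)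
    (by rwa [show (2 : ZMod q) ^ 2 = 4 by norm_num])
  refine ⟨k, Nat.pos_of_ne_zero ?_, ?_, by lia⟩
  · rintro rfl
    lia
  · rintro rfl
    exact Nat.not_even_iff_odd.mpr hp (even_of_four_pow_eq_one (by lia) h4.pow_eq_one)

end PrimeDivisors

section DivisorArithmetic

lemma exists_nonneg_of_one_add_mul_dvd {a m p : ℤ} (hp : 0 < p) (ha : 0 ≤ a) (hm : 0 ≤ m)
    (h : 1 + a * p ∣ 1 + m * p) : ∃ j, 0 ≤ j ∧ m = a + j + a * j * p := by
  obtain ⟨c, hc⟩ := h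
  obtain ⟨j, hj⟩ : p ∣ c - 1 := ⟨m - a * c, by linear_combination -hc⟩
  obtain rfl : c = 1 + p * j := by linear_combination hj
  have hcpos : 0 < 1 + p * j := by
    refine pos_of_mul_pos_right (a := 1 + a * p) ?_ (by positivity)
    rw [← hc]
    positivity
  refine ⟨j, ?_, mul_right_cancel₀ hp.ne' (by linear_combination hc)⟩
  by_contra! hj
  nlinarith

variable {k j p x y : ℤ}

lemma emod_eight_eq_three_of_cofactor_eq (hp8 : p % 8 = 5)
    (h : 25 * p + 10 - 4 * (1 - 4 * y) ^ 2 = 2 * k + j + 2 * k * j * p) : j % 8 = 3 := by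
  obtain ⟨n, hn⟩ : ∃ n, p = 8 * n + 5 := ⟨p / 8, by lia⟩
  have hdvd : (2 : ℤ) ^ 3 ∣ (2 * k + 1) * (j - 3) :=
    ⟨16 + 25 * n + 4 * y - 8 * y ^ 2 - k * j - 2 * k * j * n - k, by
      linear_combination (25 - 2 * k * j) * hn - h⟩
  have hcoprime : IsCoprime ((2 : ℤ) ^ 3) (2 * k + 1) := IsCoprime.pow_left ⟨-k, 1, by ring⟩
  have := hcoprime.dvd_of_dvd_mul_left hdvd
  lia

lemma mul_le_twelve_of_cofactor_eq (hp : 5 ≤ p) (hk : 0 < k) (hj : 0 < j)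
    (h : 25 * p + 10 - 4 * (1 - 4 * y) ^ 2 = 2 * k + j + 2 * k * j * p) : k * j ≤ 12 := by
  by_contra! hkj
  have hsq : 0 < (1 - 4 * y) ^ 2 := sq_pos_of_ne_zero (by lia)
  have hmul : 13 * p ≤ k * j * p := mul_le_mul_of_nonneg_right hkj (by lia)
  lia

lemma cofactor_cases (hk : 0 < k) (hk2 : k ≠ 2) (hj : 0 < j) (hj8 : j % 8 = 3)
    (hkj : k * j ≤ 12) : j = 3 ∧ (k = 1 ∨ k = 3 ∨ k = 4) ∨ j = 11 ∧ k = 1 := by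
  have hj12 : j ≤ 12 := (le_mul_of_one_le_left hj.le hk).trans hkj
  obtain rfl | rfl : j = 3 ∨ j = 11 := by lia
  · lia
  · lia

lemma eq_five_of_nineteen_mul_add_five_eq (hx : x ≠ 0) (hxy : p = x ^ 2 + 4 * y ^ 2)
    (h : 19 * p + 5 = 4 * (1 - 4 * y) ^ 2) : p = 5 := by
  have hx2 : 0 < x ^ 2 := sq_pos_of_ne_zero hx
  have hfactor : (3 * y + 5) * (y + 1) ≤ 0 := by lia
  obtain rfl : y = -1 := by
    rcases mul_nonpos_iff.mp hfactor with h | h <;> lia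
  lia

lemma cases_of_one_add_dvd_sq_five_mul_add_one_sub (hp8 : p % 8 = 5)
    (hxy : p = x ^ 2 + 4 * y ^ 2) (hk : 0 < k) (hk2 : k ≠ 2)
    (hdvd : 1 + 2 * k * p ∣ (5 * p + 1) ^ 2 - 4 * p * (1 - 4 * y) ^ 2) :
    (k = 1 ∧ p = 5) ∨ (k = 1 ∧ 3 * p = 4 * (1 - 4 * y) ^ 2 + 3) ∨
      (k = 3 ∧ 7 * p = 4 * (1 - 4 * y) ^ 2 - 1) ∨ (k = 4 ∧ p = 4 * (1 - 4 * y) ^ 2 + 1) := by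
  have hx : x ≠ 0 := by
    rintro rfl
    lia
  have hp : 5 ≤ p := by
    have : 0 ≤ p := by rw [hxy]; positivity
    lia
  have hm : 0 ≤ 25 * p + 10 - 4 * (1 - 4 * y) ^ 2 := by
    rw [hxy]
    nlinarith [sq_pos_of_ne_zero hx, sq_nonneg (y + 1)]
  have hfactor : (5 * p + 1) ^ 2 - 4 * p * (1 - 4 * y) ^ 2
      = 1 + (25 * p + 10 - 4 * (1 - 4 * y) ^ 2) * p := by ring
  rw [hfactor] at hdvd
  obtain ⟨j, hj0, hj⟩ := exists_nonneg_of_one_add_mul_dvd (by lia) (by lia) hm hdvd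
  have hj8 := emod_eight_eq_three_of_cofactor_eq hp8 hj
  have hjpos : 0 < j := by lia
  have hkj := mul_le_twelve_of_cofactor_eq hp hk hjpos hj
  obtain ⟨rfl, rfl | rfl | rfl⟩ | ⟨rfl, rfl⟩ := cofactor_cases hk hk2 hjpos hj8 hkj
  · exact Or.inl ⟨rfl, eq_five_of_nineteen_mul_add_five_eq hx hxy (by lia)⟩
  all_goals lia

end DivisorArithmetic

theorem lemma9
    (p : ℕ) (hp : p.Prime) (hp8 : p % 8 = 5)
    (x y : ℤ) (hx : x % 4 = 1) (hxy : (p : ℤ) = x ^ 2 + 4 * y ^ 2)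
    (θ : ℕ) (hθ : IsPrimitiveRoot (θ : ZMod p) (p - 1))
    (hy : 16 * (((cycD p θ 0).filter (fun a => (a + 1) % p ∈ cycD p θ 1)).card : ℤ)
        = (p : ℤ) + 1 + 2 * x - 8 * y)
    (d : ℤ) (hd : Prime d) (hd3 : 3 < d)
    (hdvd : d ∣ (Int.gcd (2 + eta4 p θ 1 + 2 * eta4 p θ 0 + 3 * eta4 p θ 3) (((4 : ℤ) ^ p - 1) / 3) : ℤ)) :
    d = 11 ∨ (d = 1 + 2 * (p : ℤ) ∧ 3 * (p : ℤ) = 4 * (1 - 4 * y) ^ 2 + 3) ∨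
      (d = 1 + 6 * (p : ℤ) ∧ 7 * (p : ℤ) = 4 * (1 - 4 * y) ^ 2 - 1) ∨
      (d = 1 + 8 * (p : ℤ) ∧ (p : ℤ) = 4 * (1 - 4 * y) ^ 2 + 1) := by
  have : Fact p.Prime := ⟨hp⟩
  obtain ⟨q, rfl⟩ := Int.eq_ofNat_of_zero_le (by lia : 0 ≤ d)
  have : Fact q.Prime := ⟨Nat.prime_iff_prime_int.mpr hd⟩
  have hq : q ≠ 2 := by lia
  have hqU := hdvd.trans (Int.gcd_dvd_left _ _)
  have h3 : (3 : ℤ) ∣ 4 ^ p - 1 := by simpa using sub_dvd_pow_sub_pow (4 : ℤ) 1 p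
  have hqpow : (q : ℤ) ∣ 4 ^ p - 1 :=
    (hdvd.trans (Int.gcd_dvd_right _ _)).trans (Int.ediv_dvd_of_dvd h3)
  have h4 : IsPrimitiveRoot (4 : ZMod q) p := by
    exact_mod_cast isPrimitiveRoot_intCast_of_dvd_pow_sub_one hqpow fun h ↦
      hd3.not_ge (Int.le_of_dvd (by norm_num) h)
  obtain ⟨k, hk0, hk2, rfl⟩ := exists_eq_one_add_two_mul_mul hq (Nat.odd_iff.mpr (by lia)) h4
  have hqdvd := dvd_sq_five_mul_add_one_sub hq h4 hp8 hθ hx hxy hy hqU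
  have hcases := cases_of_one_add_dvd_sq_five_mul_add_one_sub (k := k) (by lia) hxy
    (by lia) (by lia) (by exact_mod_cast hqdvd)
  obtain ⟨hk, h⟩ | ⟨hk, h⟩ | ⟨hk, h⟩ | ⟨hk, h⟩ := hcases <;> push_cast <;> rw [hk] <;> lia
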